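/- Suppose x and y are I-states of size k in {0,1,…,n} that are not too far. An interval [j+1, j+l] = {j+1, …, j+l} ⊆ {1,…,n} with l ≥ 1 is a generating interval for x and y if and only if there is an index i with 1 ≤ i ≤ n−k such that j = max(h_i^x, h_i^y) and j + l = min(h_{i+1}^x, h_{i+1}^y). -/

import Mathlib

/-- The `i`-th smallest element (0-indexed) of a finite set of natural numbers. -/
def nthElt (s : Finset ℕ) (i : ℕ) : ℕ := (s.sort (· ≤ ·)).getD i 0

/-- The hole set of an I-state: the complement `{0, …, n} \ s`. -/
def holes (n : ℕ) (s : Finset ℕ) : Finset ℕ := Finset.range (n + 1) \ s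

/-- The `i`-th hole (0-indexed): `hnth n s i` is `h_{i+1}^s` in 1-indexed notation. -/
def hnth (n : ℕ) (s : Finset ℕ) (i : ℕ) : ℕ := nthElt (holes n s) i

/-- Two I-states of size `k` are too far if `|x_i − y_i| > 1` for some `i`. -/
def TooFar (k : ℕ) (x y : Finset ℕ) : Prop :=
  ∃ i < k, 1 < ((nthElt x i : ℤ) - (nthElt y i : ℤ)).natAbs

/-- `v_i^x = |x ∩ {i, i+1, …, n}|` (for `x ⊆ {0, …, n}`). -/
def vwt (x : Finset ℕ) (i : ℕ) : ℕ := (x.filter (fun m => i ≤ m)).card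

lemma vwt_succ (x : Finset ℕ) (m : ℕ) :
    vwt x m = vwt x (m + 1) + if m ∈ x then 1 else 0 := by
  unfold vwt
  split_ifs with h
  · have : x.filter (fun a => m ≤ a) = insert m (x.filter (fun a => m + 1 ≤ a)) := by
      ext a
      simp only [Finset.mem_filter, Finset.mem_insert]
      constructor
      · rintro ⟨h1, h2⟩
        by_cases e : a = m
        · exact Or.inl e
        · exact Or.inr ⟨h1, by omega⟩
      · rintro (rfl | ⟨h1, h2⟩)
        · exact ⟨h, le_refl _⟩
        · exact ⟨h1, by omega⟩
    rw [this, Finset.card_insert_of_notMem (by simp)]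
  · rw [add_zero]
    congr 1
    ext a
    simp only [Finset.mem_filter]
    constructor
    · rintro ⟨h1, h2⟩
      have : a ≠ m := fun e => h (e ▸ h1)
      exact ⟨h1, by omega⟩
    · rintro ⟨h1, h2⟩
      exact ⟨h1, by omega⟩

lemma mem_holes (n : ℕ) (x : Finset ℕ) (m : ℕ) : m ∈ holes n x ↔ m ≤ n ∧ m ∉ x := by
  unfold holes
  rw [Finset.mem_sdiff, Finset.mem_range, Nat.lt_succ_iff]

lemma vwt_count (n : ℕ) (x : Finset ℕ) (m : ℕ) (hm : m ≤ n + 1) :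
    vwt x m + m = x.card + Nat.count (· ∈ holes n x) m := by
  induction m with
  | zero => simp [vwt]
  | succ m ih =>
    have h1 := ih (by omega)
    have h2 := vwt_succ x m
    rw [Nat.count_succ]
    have h3 := mem_holes n x m
    by_cases h : m ∈ x
    · have : m ∉ holes n x := by tauto
      simp only [h, this, if_true, if_false] at *
      omega
    · have : m ∈ holes n x := h3.2 ⟨by omega, h⟩
      simp only [h, this, if_true, if_false] at *
      omega

lemma nthElt_eq (s : Finset ℕ) (i : ℕ) : nthElt s i = Nat.nth (· ∈ s) i := by
  have hf : (Set.ofPred (· ∈ s)).Finite := s.finite_toSet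
  rw [Nat.nth_eq_getD_sort hf]
  have : hf.toFinset = s := by ext a; simp
  rw [this]
  rfl

lemma card_fin (s : Finset ℕ) (hf : (Set.ofPred (· ∈ s)).Finite) : hf.toFinset.card = s.card := by
  congr 1
  ext a; simp

lemma hole_data (n : ℕ) (x : Finset ℕ) (hx : x ⊆ Finset.range (n + 1)) :
    (∀ i < n + 1 - x.card, hnth n x i ∈ holes n x ∧
      Nat.count (· ∈ holes n x) (hnth n x i) = i) ∧
    (∀ m ∈ holes n x, Nat.count (· ∈ holes n x) m < n + 1 - x.card ∧
      hnth n x (Nat.count (· ∈ holes n x) m) = m) := by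
  have hc : (holes n x).card = n + 1 - x.card := by
    unfold holes
    rw [Finset.card_sdiff_of_subset hx, Finset.card_range]
  have hf : (Set.ofPred (· ∈ holes n x)).Finite := (holes n x).finite_toSet
  constructor
  · intro i hi
    have h : ∀ hf : (Set.ofPred (· ∈ holes n x)).Finite, i < hf.toFinset.card := by
      intro hf
      rw [card_fin, hc]; exact hi
    unfold hnth
    rw [nthElt_eq]
    exact ⟨Nat.nth_mem i h, Nat.count_nth h⟩
  · intro m hm
    have h := Nat.count_lt_card hf hm
    rw [card_fin, hc] at h
    refine ⟨h, ?_⟩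
    unfold hnth
    rw [nthElt_eq]
    exact Nat.nth_count (p := (· ∈ holes n x)) hm

/-- One-sided backward facts. -/
lemma side_back (n : ℕ) (x : Finset ℕ) (hx : x ⊆ Finset.range (n + 1)) (i j l : ℕ)
    (hi : i + 1 < n + 1 - x.card) (h1 : hnth n x i ≤ j) (h2 : j + l ≤ hnth n x (i + 1)) :
    ∀ m, j < m → m ≤ j + l → Nat.count (· ∈ holes n x) m = i + 1 := by
  intro m hm hml
  obtain ⟨ha, -⟩ := hole_data n x hx
  obtain ⟨a1, a2⟩ := ha i (by omega)
  obtain ⟨b1, b2⟩ := ha (i + 1) hi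
  have h3 := Nat.count_strict_mono (p := (· ∈ holes n x)) a1 (show hnth n x i < m by omega)
  have h4 := Nat.count_monotone (· ∈ holes n x) (show m ≤ hnth n x (i + 1) by omega)
  omega

/-- One-sided forward facts. -/
lemma side_fwd (n : ℕ) (x : Finset ℕ) (hx : x ⊆ Finset.range (n + 1)) (i j l : ℕ) (hl : 1 ≤ l)
    (hi : i + 1 < n + 1 - x.card) (h1 : Nat.count (· ∈ holes n x) (j + 1) = i + 1)
    (h2 : Nat.count (· ∈ holes n x) (j + l) = i + 1) :
    hnth n x i ≤ j ∧ j + l ≤ hnth n x (i + 1) ∧ (j ∈ holes n x → hnth n x i = j) ∧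
      (j + l ∈ holes n x → hnth n x (i + 1) = j + l) := by
  obtain ⟨ha, hb⟩ := hole_data n x hx
  obtain ⟨a1, a2⟩ := ha i (by omega)
  obtain ⟨b1, b2⟩ := ha (i + 1) hi
  refine ⟨?_, ?_, ?_, ?_⟩
  · by_contra hc
    have := Nat.count_monotone (· ∈ holes n x) (show j + 1 ≤ hnth n x i by omega)
    omega
  · by_contra hc
    have := Nat.count_strict_mono (p := (· ∈ holes n x)) b1
      (show hnth n x (i + 1) < j + l by omega)
    omega
  · intro hj
    have h3 := (hb j hj).2
    rw [Nat.count_succ, if_pos hj] at h1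
    rwa [show Nat.count (· ∈ holes n x) j = i by omega] at h3
  · intro hj
    have h3 := (hb _ hj).2
    rwa [h2] at h3

lemma count_gap (s : Finset ℕ) (j l : ℕ) (hl : 1 ≤ l)
    (h : ∀ m, j < m → m < j + l → m ∉ s) :
    Nat.count (· ∈ s) (j + l) = Nat.count (· ∈ s) (j + 1) := by
  induction l, hl using Nat.le_induction with
  | base => rfl
  | succ l hl ih =>
    rw [← add_assoc, Nat.count_succ, if_neg (h _ (by omega) (by omega)), add_zero]
    exact ih fun m h1 h2 => h m h1 (by omega)

/-- Characterization of generating intervals: for I-states `x, y` of size `k` that are not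
too far, an interval `[j+1, j+l] ⊆ {1, …, n}` with `l ≥ 1` is a generating interval
(regions `j` and `j+l` not fully used, regions strictly between fully used, and all lines
`j+1, …, j+l` uncrossed) iff `j = max(h_i^x, h_i^y)` and `j + l = min(h_{i+1}^x, h_{i+1}^y)`
for some `1 ≤ i ≤ n − k` (stated with 0-indexed `i < n − k`). -/
theorem genInterval_iff (n k : ℕ) (hkn : k ≤ n) (x y : Finset ℕ)
    (hx : x ⊆ Finset.range (n + 1)) (hy : y ⊆ Finset.range (n + 1))
    (hxk : x.card = k) (hyk : y.card = k) (hfar : ¬ TooFar k x y)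
    (j l : ℕ) (hl : 1 ≤ l) (hjl : j + l ≤ n) :
    (¬ (j ∈ x ∧ j ∈ y) ∧ ¬ (j + l ∈ x ∧ j + l ∈ y) ∧
      (∀ m, j < m → m < j + l → m ∈ x ∧ m ∈ y) ∧
      (∀ m, j < m → m ≤ j + l → vwt x m = vwt y m)) ↔
    ∃ i < n - k, j = max (hnth n x i) (hnth n y i) ∧
      j + l = min (hnth n x (i + 1)) (hnth n y (i + 1)) := by
  have memx := mem_holes n x
  have memy := mem_holes n y
  have vx := vwt_count n x
  have vy := vwt_count n y
  constructor
  · rintro ⟨h1, h2, h3, h4⟩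
    have gx := count_gap (holes n x) j l hl (fun m a b c => ((memx m).1 c).2 (h3 m a b).1)
    have gy := count_gap (holes n y) j l hl (fun m a b c => ((memy m).1 c).2 (h3 m a b).2)
    have e := h4 (j + 1) (by omega) (by omega)
    have e1 := vx (j + 1) (by omega)
    have e2 := vy (j + 1) (by omega)
    have hj : j ∈ holes n x ∨ j ∈ holes n y := by
      rw [memx, memy]
      by_cases hh : j ∈ x
      · exact Or.inr ⟨by omega, fun h => h1 ⟨hh, h⟩⟩
      · exact Or.inl ⟨by omega, hh⟩
    have hjl' : j + l ∈ holes n x ∨ j + l ∈ holes n y := by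
      rw [memx, memy]
      by_cases hh : j + l ∈ x
      · exact Or.inr ⟨by omega, fun h => h2 ⟨hh, h⟩⟩
      · exact Or.inl ⟨by omega, hh⟩
    have hpos : 0 < Nat.count (· ∈ holes n x) (j + 1) := by
      rcases hj with hj | hj
      · have := Nat.count_strict_mono (p := (· ∈ holes n x)) hj (Nat.lt_succ_self j)
        simp only [Nat.succ_eq_add_one] at this
        omega
      · have := Nat.count_strict_mono (p := (· ∈ holes n y)) hj (Nat.lt_succ_self j)
        simp only [Nat.succ_eq_add_one] at this
        omega
    have hlt : Nat.count (· ∈ holes n x) (j + 1) < n + 1 - k := by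
      rcases hjl' with hj | hj
      · have := ((hole_data n x hx).2 _ hj).1
        omega
      · have := ((hole_data n y hy).2 _ hj).1
        omega
    obtain ⟨i, hi⟩ : ∃ i, Nat.count (· ∈ holes n x) (j + 1) = i + 1 :=
      ⟨_, (Nat.sub_add_cancel hpos).symm⟩
    obtain ⟨a1, a2, a3, a4⟩ := side_fwd n x hx i j l hl (by omega) hi (by omega)
    obtain ⟨b1, b2, b3, b4⟩ := side_fwd n y hy i j l hl (by omega) (by omega) (by omega)
    refine ⟨i, by omega, ?_, ?_⟩
    · rcases hj with hj | hj
      · have := a3 hj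
        omega
      · have := b3 hj
        omega
    · rcases hjl' with hj | hj
      · have := a4 hj
        omega
      · have := b4 hj
        omega
  · rintro ⟨i, hi, hj, hjl'⟩
    have cx := side_back n x hx i j l (by omega) (by omega) (by omega)
    have cy := side_back n y hy i j l (by omega) (by omega) (by omega)
    have dx := (hole_data n x hx).1
    have dy := (hole_data n y hy).1
    refine ⟨?_, ?_, ?_, ?_⟩
    · rintro ⟨p, q⟩
      rcases max_choice (hnth n x i) (hnth n y i) with e | e
      · have := (dx i (by omega)).1
        rw [← e, ← hj, memx] at this
        exact this.2 p
      · have := (dy i (by omega)).1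
        rw [← e, ← hj, memy] at this
        exact this.2 q
    · rintro ⟨p, q⟩
      rcases min_choice (hnth n x (i + 1)) (hnth n y (i + 1)) with e | e
      · have := (dx (i + 1) (by omega)).1
        rw [← e, ← hjl', memx] at this
        exact this.2 p
      · have := (dy (i + 1) (by omega)).1
        rw [← e, ← hjl', memy] at this
        exact this.2 q
    · intro m m1 m2
      constructor
      · by_contra hm
        have := Nat.count_strict_mono (p := (· ∈ holes n x)) ((memx m).2 ⟨by omega, hm⟩)
          (show m < m + 1 by omega)
        have u1 := cx m m1 (by omega)
        have u2 := cx (m + 1) (by omega) (by omega)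
        omega
      · by_contra hm
        have := Nat.count_strict_mono (p := (· ∈ holes n y)) ((memy m).2 ⟨by omega, hm⟩)
          (show m < m + 1 by omega)
        have u1 := cy m m1 (by omega)
        have u2 := cy (m + 1) (by omega) (by omega)
        omega
    · intro m m1 m2
      have u1 := cx m m1 m2
      have u2 := cy m m1 m2
      have u3 := vx m (by omega)
      have u4 := vy m (by omega)
      omega
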